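/- Let K be a field. The K-bilinear extension of the planar shuffle product ⧢ makes the free K-module on PRT' into a commutative, associative, unital K-algebra whose unit is the empty tree 1 (i.e., 1 ⧢ f = f for all f). -/

import Mathlib

inductive PTree : Type where
  | node : List PTree → PTree

namespace PTree

/-- the single-vertex tree -/
def x : PTree := node []

/-- the number of leaves of a tree -/
def deg : PTree → ℕ
  | node l => max 1 (l.attach.map fun t => deg t.1).sum
decreasing_by
  have := List.sizeOf_lt_of_mem t.2
  simp; omega

/-- a tree is reduced if no vertex has arity 1 -/
inductive Reduced : PTree → Prop where
  | node (l : List PTree) (hlen : l.length ≠ 1) (h : ∀ t ∈ l, Reduced t) :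
      Reduced (node l)

/-- the reduction of a tree -/
def red : PTree → PTree
  | node [t] => red t
  | node l => node (l.attach.map fun t => red t.1)
decreasing_by
  · simp; omega
  · have := List.sizeOf_lt_of_mem t.2
    simp; omega

mutual
/-- the spanning subtree `T_I` determined by a set `I ⊆ range (deg T)` of leaf positions
(counted from the left, starting at `0`) -/
def sub : PTree → Finset ℕ → PTree
  | node l, I => node (subList l I)
/-- auxiliary: the list of spanning subtrees of the children, children without
selected leaves being dropped -/
def subList : List PTree → Finset ℕ → List PTree
  | [], _ => []
  | t :: ts, I =>
      (if (I.filter (· < t.deg)).Nonempty then [sub t (I.filter (· < t.deg))] else [])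
        ++ subList ts ((I.filter fun j => t.deg ≤ j).image fun j => j - t.deg)
end

/-- the contraction `T|I`: the reduction of the spanning subtree, `1` (i.e. `none`) if `I = ∅` -/
def contract (T : PTree) (I : Finset ℕ) : Option PTree :=
  if I = ∅ then none else some (red (sub T I))

end PTree

/-- `PRT'`: finite planar rooted trees together with the empty tree `1 = none` -/
abbrev OT := Option PTree

/-- `deg` on `PRT'` -/
def degO (o : OT) : ℕ := o.elim 0 PTree.deg

/-- membership in `PRT'` = reduced trees together with the empty tree `1` -/
def ROT (o : OT) : Prop := ∀ t, o = some t → t.Reduced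

/-- contraction on `PRT'` -/
def contractO : OT → Finset ℕ → OT
  | none, _ => none
  | some t, I => PTree.contract t I

open Classical in
/-- `N_{S,T}(V)` as a finite set of subsets of the set of leaf positions of `V` -/
noncomputable def NFinset (S T V : OT) : Finset (Finset ℕ) :=
  (Finset.range (degO V)).powerset.filter fun I =>
    contractO V I = S ∧ contractO V (Finset.range (degO V) \ I) = T

/-- `#N_{S,T}(V)` -/
noncomputable def Ncount (S T V : OT) : ℕ := (NFinset S T V).card

/-- the free `K`-module on `PRT'` (realized inside the free module on all of `Option PTree`;
the elements of the free module on `PRT'` are those whose support satisfies `ROT`) -/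
abbrev AMod (K : Type) [Field K] := OT →₀ K

/-- `f` belongs to the free `K`-module on `PRT'` -/
def suppRed (K : Type) [Field K] (f : AMod K) : Prop := ∀ t ∈ f.support, ROT t

/-- the planar shuffle product `S ⧢ T = Σ_{V ∈ PRT'} #N_{S,T}(V)·V` of two monomials -/
noncomputable def shuffleM (K : Type) [Field K] (S T : OT) : AMod K :=
  ∑ᶠ (V : OT) (_ : ROT V), Finsupp.single V ((Ncount S T V : K))

/-- the `K`-bilinear extension of the planar shuffle product -/
noncomputable def shuffleF (K : Type) [Field K] (f g : AMod K) : AMod K :=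
  f.sum fun S a => g.sum fun T b => (a * b) • shuffleM K S T

/-- tensor-like product of a list of module elements, as a finitely supported
function on lists of basis elements -/
noncomputable def listProd (K : Type) [Field K] {σ : Type} : List (σ →₀ K) → (List σ →₀ K)
  | [] => Finsupp.single [] 1
  | f :: fs => f.sum fun t a => (listProd K fs).sum fun ts b => Finsupp.single (t :: ts) (a * b)

/-- the `K`-multilinear extension of an operation on basis elements -/
noncomputable def mulExt (K : Type) [Field K] {σ τ : Type} (op : List σ → τ)
    (l : List (σ →₀ K)) : τ →₀ K :=
  (listProd K l).sum fun ts c => Finsupp.single (op ts) c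

/-- `gr` : delete all entries equal to `1`, then return `1` if no entry remains,
the unique entry if exactly one remains, and the grafting `node` otherwise -/
def grO (ts : List OT) : OT :=
  match ts.reduceOption with
  | [] => none
  | [t] => some t
  | l => some (PTree.node l)

/-- the `K`-multilinear extension of `gr` -/
noncomputable def grF (K : Type) [Field K] (l : List (AMod K)) : AMod K := mulExt K grO l

/-- the `K`-multilinear extension of the grafting `node` (junk value `0` on lists
containing the empty tree `1`, which never occurs in its uses here) -/
noncomputable def nodeF (K : Type) [Field K] (l : List (AMod K)) : AMod K :=
  (listProd K l).sum fun ts c =>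
    match (ts.mapM (id : Option PTree → Option PTree) : Option (List PTree)) with
    | some l' => Finsupp.single (some (PTree.node l')) c
    | none => 0

/-!
Contraction commutes with grafting: the contraction of `gr(T₁, …, Tₘ)` at `I` is
`gr(T₁|I₁, …, Tₘ|Iₘ)`, with `Iⱼ` the part of `I` in `Tⱼ`. By induction on trees it follows that
`V|I` has exactly `#I` leaves and that contracting `V|I` further amounts to contracting `V` at a
subset of `I`. Hence the coefficient of `V` in `(R ⧢ S) ⧢ T` counts the ordered partitions
`(A, B, C)` of the leaves of `V` with `V|A = R`, `V|B = S` and `V|C = T`. This number is invariant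
under cyclic rotation of `(R, S, T)`, so that `(R ⧢ S) ⧢ T = (S ⧢ T) ⧢ R`, and associativity follows
from commutativity, which is the symmetry `I ↔ Iᶜ`.
-/

open Finset

section LeafPositions

/-- The elements of `I` that are at least `n`, shifted down by `n`. In a list of trees whose first
entry has `n` leaves, these are the selected leaves of the remaining entries. -/
def shiftDown (n : ℕ) (I : Finset ℕ) : Finset ℕ :=
  (I.filter fun j => n ≤ j).image fun j => j - n

/-- The elements of `I` whose rank in `I`, counted from `0`, lies in `J`. If `I` is a set of leaves
of `V`, then `select I J` is the set of leaves of `V` that corresponds to the set `J` of leaves of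
the contraction `V|I`. -/
def select (I J : Finset ℕ) : Finset ℕ :=
  {i ∈ I | Nat.count (· ∈ I) i ∈ J}

/-- The ranks in `I`, counted from `0`, of the elements of `A`. On subsets of `I` this is the
inverse of `select I`. -/
def ranks (I A : Finset ℕ) : Finset ℕ :=
  A.image (Nat.count (· ∈ I))

variable {n m i : ℕ} {I J A : Finset ℕ}

@[simp]
lemma mem_shiftDown : i ∈ shiftDown n I ↔ n + i ∈ I := by
  simp only [shiftDown, mem_image, mem_filter]
  exact ⟨fun ⟨a, ⟨ha, hn⟩, hi⟩ => by rwa [← hi, Nat.add_sub_cancel' hn],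
    fun h => ⟨n + i, ⟨h, n.le_add_right i⟩, by lia⟩⟩

lemma mem_select : i ∈ select I J ↔ i ∈ I ∧ Nat.count (· ∈ I) i ∈ J :=
  mem_filter

lemma select_subset : select I J ⊆ I :=
  filter_subset _ _

lemma shiftDown_subset_range (h : I ⊆ range (n + m)) : shiftDown n I ⊆ range m := fun i hi => by
  simpa using h (mem_shiftDown.1 hi)

lemma filter_lt_subset_range (n : ℕ) (I : Finset ℕ) : {j ∈ I | j < n} ⊆ range n := fun i hi => by
  simpa using (mem_filter.1 hi).2

lemma filter_lt_eq_self (h : I ⊆ range n) : {j ∈ I | j < n} = I :=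
  filter_true_of_mem fun _ hi => mem_range.1 (h hi)

lemma shiftDown_zero (I : Finset ℕ) : shiftDown 0 I = I := by
  ext; simp

lemma shiftDown_range_add (n m : ℕ) : shiftDown n (range (n + m)) = range m := by
  ext; simp

lemma filter_lt_range_add (n m : ℕ) : {j ∈ range (n + m) | j < n} = range n := by
  ext; simp; lia

lemma card_filter_lt_add_card_shiftDown (n : ℕ) (I : Finset ℕ) :
    #{j ∈ I | j < n} + #(shiftDown n I) = #I := by
  rw [shiftDown, card_image_of_injOn, ← card_filter_add_card_filter_not (s := I) (· < n)]
  · simp only [not_lt]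
  · intro i hi j hj hij
    simp only [coe_filter, Set.mem_ofPred_eq] at hi hj hij
    lia

lemma count_mem_eq_card (I : Finset ℕ) (n : ℕ) : Nat.count (· ∈ I) n = #{j ∈ I | j < n} := by
  rw [Nat.count_eq_card_filter_range]
  congr 1
  ext; simp [and_comm]

lemma count_mem_lt_card (hi : i ∈ I) : Nat.count (· ∈ I) i < #I := by
  rw [count_mem_eq_card]
  exact card_lt_card (filter_ssubset.2 ⟨i, hi, lt_irrefl i⟩)

lemma injOn_count_mem (I : Finset ℕ) : Set.InjOn (Nat.count (· ∈ I)) I :=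
  fun _ hi _ hj => Nat.count_injective hi hj

lemma surjOn_count_mem (I : Finset ℕ) : Set.SurjOn (Nat.count (· ∈ I)) I (range #I) :=
  surjOn_of_injOn_of_card_le _ (fun _ hi => mem_coe.2 (mem_range.2 (count_mem_lt_card hi)))
    (injOn_count_mem I) (card_range _).le

lemma select_range_card_sdiff (I J : Finset ℕ) : select I (range #I \ J) = I \ select I J := by
  ext i
  simp only [mem_select, mem_sdiff, mem_range]
  have := @count_mem_lt_card i I
  tauto

lemma ranks_subset_range (h : A ⊆ I) : ranks I A ⊆ range #I :=
  image_subset_iff.2 fun _ hi => mem_range.2 (count_mem_lt_card (h hi))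

lemma select_ranks (h : A ⊆ I) : select I (ranks I A) = A := by
  ext i
  rw [mem_select, ranks, mem_image]
  constructor
  · rintro ⟨hi, j, hj, hij⟩
    rwa [← injOn_count_mem I (h hj) hi hij]
  · exact fun hi => ⟨h hi, i, hi, rfl⟩

lemma ranks_select (h : J ⊆ range #I) : ranks I (select I J) = J := by
  ext j
  rw [ranks, mem_image]
  constructor
  · rintro ⟨i, hi, rfl⟩
    exact (mem_select.1 hi).2
  · intro hj
    obtain ⟨i, hi, rfl⟩ := surjOn_count_mem I (h hj)
    exact ⟨i, mem_select.2 ⟨hi, hj⟩, rfl⟩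

lemma select_empty (I : Finset ℕ) : select I ∅ = ∅ :=
  filter_false_of_mem fun _ _ => notMem_empty _

lemma select_nonempty (hJ : J ⊆ range #I) (h : J.Nonempty) : (select I J).Nonempty :=
  image_nonempty.1 ((ranks_select hJ).symm ▸ h)

lemma count_mem_filter_lt (h : i ≤ n) :
    Nat.count (· ∈ {j ∈ I | j < n}) i = Nat.count (· ∈ I) i := by
  rw [count_mem_eq_card, count_mem_eq_card, filter_filter]
  exact congrArg card (filter_congr fun j _ => by lia)

lemma filter_lt_select (n : ℕ) (I J : Finset ℕ) :
    {i ∈ select I J | i < n} =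
      select {i ∈ I | i < n} {j ∈ J | j < #{i ∈ I | i < n}} := by
  ext i
  rw [mem_filter, mem_select, mem_select, mem_filter, mem_filter, ← count_mem_eq_card,
    and_right_comm]
  refine and_congr_right fun ⟨hi, hn⟩ => ?_
  rw [count_mem_filter_lt hn.le, and_iff_left (Nat.count_strict_mono hi hn)]

lemma shiftDown_select (n : ℕ) (I J : Finset ℕ) :
    shiftDown n (select I J) = select (shiftDown n I) (shiftDown #{i ∈ I | i < n} J) := by
  ext i
  simp only [mem_shiftDown, mem_select, Nat.count_add, count_mem_eq_card I n]

end LeafPositions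

section Contraction

namespace PTree

@[elab_as_elim, induction_eliminator]
theorem inductionOn {P : PTree → Prop} (node : ∀ l : List PTree, (∀ t ∈ l, P t) → P (node l))
    (t : PTree) : P t :=
  match t with
  | .node l => node l fun s _ => inductionOn node s
termination_by sizeOf t
decreasing_by
  have := List.sizeOf_lt_of_mem ‹s ∈ l›
  simp only [PTree.node.sizeOf_spec]
  lia

lemma deg_leaf : deg (node []) = 1 := by
  simp [deg]

lemma one_le_deg (t : PTree) : 1 ≤ deg t := by
  cases t
  rw [deg]
  exact le_max_left _ _

lemma length_le_sum_deg (l : List PTree) : l.length ≤ (l.map deg).sum := by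
  simpa using (l.map deg).length_le_sum_of_one_le (by simpa using fun t _ => one_le_deg t)

lemma deg_node {l : List PTree} (hl : l ≠ []) : deg (node l) = (l.map deg).sum := by
  have := length_le_sum_deg l
  have := List.length_pos_iff.2 hl
  simp only [deg, List.attach_map_val]
  lia

lemma deg_lt_sum_deg {l : List PTree} {t : PTree} (ht : t ∈ l) (hl : 2 ≤ l.length) :
    deg t < (l.map deg).sum := by
  obtain ⟨l₁, l₂, rfl⟩ := List.append_of_mem ht
  have := length_le_sum_deg l₁
  have := length_le_sum_deg l₂
  simp only [List.length_append, List.length_cons, List.map_append, List.map_cons, List.sum_append,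
    List.sum_cons] at hl ⊢
  lia

lemma red_node_singleton (t : PTree) : red (node [t]) = red t := by
  rw [red]

lemma red_node {l : List PTree} (hl : l.length ≠ 1) : red (node l) = node (l.map red) := by
  rw [red]
  · simp
  · rintro t rfl
    exact hl rfl

lemma reduced_red (t : PTree) : (red t).Reduced := by
  induction t with
  | node l ih =>
    by_cases hl : l.length = 1
    · obtain ⟨t, rfl⟩ := List.length_eq_one_iff.1 hl
      rw [red_node_singleton]
      exact ih t (List.mem_singleton_self t)
    · rw [red_node hl]
      exact .node _ (by simpa using hl) (by simpa using ih)

lemma finite_setOf_reduced_deg_le (n : ℕ) : {t : PTree | t.Reduced ∧ t.deg ≤ n}.Finite := by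
  induction n with
  | zero =>
    refine Set.finite_empty.subset fun t ht => ?_
    have := one_le_deg t
    have := ht.2
    lia
  | succ n ih =>
    have := ih.to_subtype
    refine (((List.finite_length_le {t : PTree | t.Reduced ∧ t.deg ≤ n} (n + 1)).image
      (List.map Subtype.val)).image node).subset ?_
    rintro _ ⟨⟨l, hlen, hred⟩, hdeg⟩
    suffices h : l.length ≤ n + 1 ∧ ∀ t ∈ l, t.deg ≤ n by
      obtain ⟨l', hl'⟩ := (Set.range_list_map_coe {t : PTree | t.Reduced ∧ t.deg ≤ n}).ge
        fun t ht => ⟨hred t ht, h.2 t ht⟩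
      exact ⟨l, ⟨l', (by simpa [← hl'] using h.1 : l'.length ≤ n + 1), hl'⟩, rfl⟩
    obtain rfl | hl := eq_or_ne l []
    · simp
    rw [deg_node hl] at hdeg
    refine ⟨(length_le_sum_deg l).trans hdeg, fun t ht => ?_⟩
    have := List.length_pos_iff.2 hl
    have := deg_lt_sum_deg ht (by lia)
    lia

lemma subList_eq_nil_iff {l : List PTree} {I : Finset ℕ} (hI : I ⊆ range (l.map deg).sum) :
    subList l I = [] ↔ I = ∅ := by
  induction l generalizing I with
  | nil => simpa [subList] using hI
  | cons t ts ih =>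
    change _ ++ subList ts (shiftDown t.deg I) = [] ↔ _
    rw [List.append_eq_nil_iff, ih (shiftDown_subset_range hI), ← card_eq_zero (s := I),
      ← card_filter_lt_add_card_shiftDown t.deg I, Nat.add_eq_zero_iff, card_eq_zero, card_eq_zero]
    simp [nonempty_iff_ne_empty]

lemma contract_empty (t : PTree) : contract t ∅ = none :=
  if_pos rfl

lemma contract_eq_none_iff {t : PTree} {I : Finset ℕ} : contract t I = none ↔ I = ∅ := by
  simp [contract]

lemma contract_leaf {I : Finset ℕ} (hI : I ≠ ∅) : contract (node []) I = some (node []) := by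
  rw [contract, if_neg hI, sub, subList, red_node (by simp), List.map_nil]

end PTree

open PTree

/-- The contractions of the entries of a list of trees, whose leaves are numbered consecutively from
left to right. -/
def contractList : List OT → Finset ℕ → List OT
  | [], _ => []
  | T :: ts, I => contractO T {j ∈ I | j < degO T} :: contractList ts (shiftDown (degO T) I)

@[simp]
lemma degO_none : degO none = 0 := rfl

@[simp]
lemma degO_some (t : PTree) : degO (some t) = t.deg := rfl

lemma degO_node {l : List PTree} (hl : l ≠ []) :
    degO (some (node l)) = ((l.map some).map degO).sum := by
  rw [degO_some, deg_node hl, List.map_map]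
  rfl

lemma contractO_eq_none_iff {V : OT} {I : Finset ℕ} (hI : I ⊆ range (degO V)) :
    contractO V I = none ↔ I = ∅ := by
  cases V with
  | none => simpa [contractO] using hI
  | some t => exact contract_eq_none_iff

lemma contractO_empty (V : OT) : contractO V ∅ = none :=
  (contractO_eq_none_iff (empty_subset _)).2 rfl

lemma rOT_contractO (V : OT) (I : Finset ℕ) : ROT (contractO V I) := by
  rintro t ht
  cases V with
  | none => cases ht
  | some v =>
    obtain ⟨-, rfl⟩ : I ≠ ∅ ∧ red (sub v I) = t := by simpa [contractO, contract] using ht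
    exact reduced_red _

lemma grO_singleton (T : OT) : grO [T] = T := by
  cases T <;> rfl

lemma grO_map_some {l : List PTree} (hl : 2 ≤ l.length) : grO (l.map some) = some (node l) := by
  match l, hl with
  | s :: t :: l, _ => simp [grO, List.reduceOption]

lemma some_red_node {l : List PTree} (hl : l ≠ []) :
    some (red (node l)) = grO ((l.map red).map some) := by
  obtain hlen | hlen := eq_or_ne l.length 1
  · obtain ⟨t, rfl⟩ := List.length_eq_one_iff.1 hlen
    exact congrArg some (red_node_singleton t)
  · have := List.length_pos_iff.2 hl
    rw [red_node hlen, grO_map_some (by rw [List.length_map]; lia)]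

lemma grO_congr {ts us : List OT} (h : ts.reduceOption = us.reduceOption) : grO ts = grO us := by
  rw [grO, grO, h]

lemma grO_map_some_reduceOption (ts : List OT) : grO (ts.reduceOption.map some) = grO ts :=
  grO_congr (by simp [List.reduceOption])

lemma degO_grO (ts : List OT) : degO (grO ts) = (ts.map degO).sum := by
  have hsum : (ts.map degO).sum = (ts.reduceOption.map deg).sum := by
    induction ts with
    | nil => rfl
    | cons T ts ih => cases T <;> simp [ih]
  rw [hsum, ← grO_map_some_reduceOption]
  match ts.reduceOption with
  | [] => rfl
  | [t] => simp [grO_singleton]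
  | s :: t :: l => rw [grO_map_some (by simp), degO_some, deg_node (by simp)]

lemma reduceOption_cons (T : OT) (ts : List OT) :
    (T :: ts).reduceOption = T.toList ++ ts.reduceOption := by
  cases T <;> simp

lemma reduceOption_contractList_map_some (l : List PTree) (I : Finset ℕ) :
    (contractList (l.map some) I).reduceOption = (subList l I).map red := by
  induction l generalizing I with
  | nil => simp [contractList, subList]
  | cons t ts ih =>
    change _ = List.map red ((if _ then _ else _) ++ subList ts (shiftDown t.deg I))
    rw [List.map_append, ← ih, List.map_cons, contractList, reduceOption_cons]
    congr 1
    change (contract t {j ∈ I | j < t.deg}).toList = _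
    obtain h | h := {j ∈ I | j < t.deg}.eq_empty_or_nonempty
    · rw [h, contract_empty, if_neg Finset.not_nonempty_empty]
      rfl
    · rw [contract, if_neg h.ne_empty, if_pos h]
      rfl

lemma reduceOption_contractList_reduceOption (ts : List OT) (I : Finset ℕ) :
    (contractList (ts.reduceOption.map some) I).reduceOption =
      (contractList ts I).reduceOption := by
  induction ts generalizing I with
  | nil => rfl
  | cons T ts ih =>
    cases T with
    | none => simp [contractList, contractO, shiftDown_zero, ih]
    | some t =>
      rw [List.reduceOption_cons_of_some, List.map_cons, contractList, contractList,
        reduceOption_cons, reduceOption_cons, ih]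

lemma contractO_node {l : List PTree} {I : Finset ℕ}
    (hI : I ⊆ range ((l.map some).map degO).sum) :
    contractO (some (node l)) I = grO (contractList (l.map some) I) := by
  rw [List.map_map] at hI
  rw [contractO, ← grO_map_some_reduceOption, reduceOption_contractList_map_some]
  obtain rfl | hne := eq_or_ne I ∅
  · rw [contract_empty, (subList_eq_nil_iff hI).2 rfl]
    rfl
  · rw [contract, if_neg hne, sub, some_red_node (mt (subList_eq_nil_iff hI).1 hne)]

lemma contractO_grO_map_some {l : List PTree} {I : Finset ℕ}
    (hI : I ⊆ range ((l.map some).map degO).sum) :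
    contractO (grO (l.map some)) I = grO (contractList (l.map some) I) := by
  match l with
  | [] => rfl
  | [t] =>
    rw [List.map_singleton, List.map_singleton, List.sum_singleton] at hI
    simp only [List.map_singleton, contractList, grO_singleton, filter_lt_eq_self hI]
  | s :: t :: l =>
    rw [grO_map_some (by simp)]
    exact contractO_node hI

theorem contractO_grO {ts : List OT} {I : Finset ℕ} (hI : I ⊆ range (ts.map degO).sum) :
    contractO (grO ts) I = grO (contractList ts I) :=
  calc
    contractO (grO ts) I = contractO (grO (ts.reduceOption.map some)) I := by
      rw [grO_map_some_reduceOption]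
    _ = grO (contractList (ts.reduceOption.map some) I) :=
      contractO_grO_map_some (by rwa [← degO_grO, grO_map_some_reduceOption, degO_grO])
    _ = grO (contractList ts I) := grO_congr (reduceOption_contractList_reduceOption ts I)

lemma sum_degO_contractList {ts : List OT}
    (h : ∀ T ∈ ts, ∀ J ⊆ range (degO T), degO (contractO T J) = #J) {I : Finset ℕ}
    (hI : I ⊆ range (ts.map degO).sum) : ((contractList ts I).map degO).sum = #I := by
  induction ts generalizing I with
  | nil => simp_all [contractList]
  | cons T ts ih =>
    rw [List.forall_mem_cons] at h
    rw [contractList, List.map_cons, List.sum_cons, h.1 _ (filter_lt_subset_range _ _),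
      ih h.2 (shiftDown_subset_range hI), card_filter_lt_add_card_shiftDown]

theorem degO_contractO {V : OT} {I : Finset ℕ} (hI : I ⊆ range (degO V)) :
    degO (contractO V I) = #I := by
  cases V with
  | none => simp_all [contractO]
  | some t =>
  induction t generalizing I with
  | node l ih =>
    obtain rfl | hl := eq_or_ne l []
    · rw [degO_some, deg_leaf, range_one, subset_singleton_iff] at hI
      obtain rfl | rfl := hI
      · rw [contractO_empty, degO_none, card_empty]
      · rw [contractO, contract_leaf (singleton_ne_empty 0), degO_some, deg_leaf, card_singleton]
    · rw [degO_node hl] at hI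
      rw [contractO_node hI, degO_grO]
      exact sum_degO_contractList (List.forall_mem_map.2 fun t ht _ => ih t ht) hI

lemma contractList_contractList {ts : List OT}
    (h : ∀ T ∈ ts, ∀ I ⊆ range (degO T), ∀ J ⊆ range #I,
      contractO (contractO T I) J = contractO T (select I J))
    {I J : Finset ℕ} (hI : I ⊆ range (ts.map degO).sum) (hJ : J ⊆ range #I) :
    contractList (contractList ts I) J = contractList ts (select I J) := by
  induction ts generalizing I J with
  | nil => rfl
  | cons T ts ih =>
    rw [List.forall_mem_cons] at h
    rw [← card_filter_lt_add_card_shiftDown (degO T) I] at hJ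
    simp only [contractList, degO_contractO (filter_lt_subset_range (degO T) I)]
    rw [h.1 _ (filter_lt_subset_range _ _) _ (filter_lt_subset_range _ _), ← filter_lt_select,
      ih h.2 (shiftDown_subset_range hI) (shiftDown_subset_range hJ), ← shiftDown_select]

theorem contractO_contractO {V : OT} {I J : Finset ℕ} (hI : I ⊆ range (degO V))
    (hJ : J ⊆ range #I) : contractO (contractO V I) J = contractO V (select I J) := by
  cases V with
  | none => rfl
  | some t =>
  induction t generalizing I J with
  | node l ih =>
    obtain rfl | hl := eq_or_ne l []
    · obtain rfl | hJne := eq_or_ne J ∅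
      · rw [select_empty, contractO_empty, contractO_empty]
      · have hne : select I J ≠ ∅ := (select_nonempty hJ (nonempty_iff_ne_empty.2 hJne)).ne_empty
        have hIne : I ≠ ∅ := fun h => hne (subset_empty.1 (h ▸ select_subset))
        simp only [contractO, contract_leaf hIne, contract_leaf hJne, contract_leaf hne]
    · rw [degO_node hl] at hI
      rw [contractO_node hI, contractO_node (select_subset.trans hI), contractO_grO,
        contractList_contractList (List.forall_mem_map.2 fun t ht _ hI _ hJ => ih t ht hJ hI) hI hJ]
      rwa [sum_degO_contractList (fun _ _ _ => degO_contractO) hI]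

lemma contractList_range {ts : List OT} (h : ∀ T ∈ ts, contractO T (range (degO T)) = T) :
    contractList ts (range (ts.map degO).sum) = ts := by
  induction ts with
  | nil => rfl
  | cons T ts ih =>
    rw [List.forall_mem_cons] at h
    rw [List.map_cons, List.sum_cons, contractList, filter_lt_range_add, shiftDown_range_add, h.1,
      ih h.2]

theorem contractO_range_degO {V : OT} (hV : ROT V) : contractO V (range (degO V)) = V := by
  cases V with
  | none => rfl
  | some t =>
  replace hV := hV t rfl
  induction hV with
  | node l hlen _ ih =>
    obtain rfl | hl := eq_or_ne l []
    · exact contract_leaf (by simp [deg_leaf])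
    · have := List.length_pos_iff.2 hl
      rw [degO_node hl, contractO_node subset_rfl,
        contractList_range (List.forall_mem_map.2 ih), grO_map_some (by lia)]

end Contraction

section Shuffle

lemma mem_NFinset {S T V : OT} {I : Finset ℕ} :
    I ∈ NFinset S T V ↔ I ⊆ range (degO V) ∧ contractO V I = S ∧
      contractO V (range (degO V) \ I) = T := by
  simp only [NFinset, mem_filter, mem_powerset]

lemma Ncount_comm (S T V : OT) : Ncount S T V = Ncount T S V := by
  have maps (S T : OT) :
      Set.MapsTo (range (degO V) \ ·) (NFinset S T V : Set (Finset ℕ)) (NFinset T S V) := by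
    intro I hI
    obtain ⟨hI, hS, hT⟩ := mem_NFinset.1 hI
    exact mem_NFinset.2 ⟨sdiff_subset, hT,
      (congrArg (contractO V) (Finset.sdiff_sdiff_eq_self hI)).trans hS⟩
  have involutive (S T : OT) : Set.LeftInvOn (range (degO V) \ ·) (range (degO V) \ ·)
      (NFinset S T V : Set (Finset ℕ)) :=
    fun I hI => Finset.sdiff_sdiff_eq_self (mem_NFinset.1 hI).1
  exact card_nbij' _ _ (maps S T) (maps T S) (involutive S T) (involutive T S)

lemma degO_eq_add_of_mem_NFinset {S T V : OT} {I : Finset ℕ} (h : I ∈ NFinset S T V) :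
    degO V = degO S + degO T := by
  obtain ⟨hI, rfl, rfl⟩ := mem_NFinset.1 h
  rw [degO_contractO hI, degO_contractO sdiff_subset, add_comm, card_sdiff_add_card_eq_card hI,
    card_range]

lemma nonempty_NFinset_iff {S T V : OT} : (NFinset S T V).Nonempty ↔ Ncount S T V ≠ 0 :=
  card_ne_zero.symm

lemma finite_setOf_Ncount_ne_zero (S T : OT) : {V : OT | ROT V ∧ Ncount S T V ≠ 0}.Finite := by
  refine (((PTree.finite_setOf_reduced_deg_le (degO S + degO T)).image some).insert none).subset ?_
  rintro (_ | t) ⟨ht, hN⟩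
  · exact .inl rfl
  · obtain ⟨I, hI⟩ := nonempty_NFinset_iff.2 hN
    exact .inr ⟨t, ⟨ht t rfl, (degO_eq_add_of_mem_NFinset hI).le⟩, rfl⟩

/-- The set of trees `V ∈ PRT'` with `N_{S,T}(V) ≠ ∅`. It contains the support of `S ⧢ T`, properly
if the characteristic of `K` divides some `#N_{S,T}(V)`. -/
noncomputable def shuffleTerms (S T : OT) : Finset OT :=
  (finite_setOf_Ncount_ne_zero S T).toFinset

lemma mem_shuffleTerms {S T V : OT} : V ∈ shuffleTerms S T ↔ ROT V ∧ Ncount S T V ≠ 0 :=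
  Set.Finite.mem_toFinset _

lemma Ncount_none_left (T : OT) {V : OT} [Decidable (V = T)] (hV : ROT V) :
    Ncount none T V = if V = T then 1 else 0 := by
  have mem_iff (I : Finset ℕ) : I ∈ NFinset none T V ↔ I = ∅ ∧ V = T := by
    rw [mem_NFinset]
    constructor
    · rintro ⟨hI, hnone, hT⟩
      obtain rfl := (contractO_eq_none_iff hI).1 hnone
      rw [sdiff_empty, contractO_range_degO hV] at hT
      exact ⟨rfl, hT⟩
    · rintro ⟨rfl, rfl⟩
      exact ⟨empty_subset _, contractO_empty V, by rw [sdiff_empty, contractO_range_degO hV]⟩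
  split_ifs with h
  · exact card_eq_one.2 ⟨∅, by ext I; rw [mem_iff, and_iff_left h, mem_singleton]⟩
  · exact card_eq_zero.2 (eq_empty_of_forall_notMem fun I hI => h ((mem_iff I).1 hI).2)

open Classical in
/-- The ordered partitions `(A, B, C)` of the set of leaves of `V` with `V|A = R`, `V|B = S` and
`V|C = T`. -/
noncomputable def tripartitions (R S T V : OT) : Finset (Finset ℕ × Finset ℕ × Finset ℕ) :=
  {p ∈ (range (degO V)).powerset ×ˢ (range (degO V)).powerset ×ˢ (range (degO V)).powerset |
    (Disjoint p.1 p.2.1 ∧ Disjoint p.2.1 p.2.2 ∧ Disjoint p.2.2 p.1) ∧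
    p.1 ∪ p.2.1 ∪ p.2.2 = range (degO V) ∧
    contractO V p.1 = R ∧ contractO V p.2.1 = S ∧ contractO V p.2.2 = T}

lemma mem_tripartitions {R S T V : OT} {A B C : Finset ℕ} :
    (A, B, C) ∈ tripartitions R S T V ↔
      (Disjoint A B ∧ Disjoint B C ∧ Disjoint C A) ∧ A ∪ B ∪ C = range (degO V) ∧
        contractO V A = R ∧ contractO V B = S ∧ contractO V C = T := by
  simp only [tripartitions, mem_filter, mem_product, mem_powerset, and_iff_right_iff_imp]
  rintro ⟨-, h, -⟩
  rw [← h]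
  exact ⟨subset_union_left.trans subset_union_left, subset_union_right.trans subset_union_left,
    subset_union_right⟩

lemma rotate_mem_tripartitions {R S T V : OT} {A B C : Finset ℕ}
    (h : (A, B, C) ∈ tripartitions R S T V) : (B, C, A) ∈ tripartitions S T R V := by
  obtain ⟨⟨hAB, hBC, hCA⟩, hunion, hR, hS, hT⟩ := mem_tripartitions.1 h
  exact mem_tripartitions.2 ⟨⟨hBC, hCA, hAB⟩, by rw [union_comm, ← union_assoc, hunion], hS, hT, hR⟩

lemma card_tripartitions_rotate (R S T V : OT) :
    #(tripartitions R S T V) = #(tripartitions S T R V) :=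
  card_nbij' (fun (A, B, C) => (B, C, A)) (fun (B, C, A) => (A, B, C))
    (fun _ h => rotate_mem_tripartitions h)
    (fun _ h => rotate_mem_tripartitions (rotate_mem_tripartitions h))
    (fun _ _ => rfl) fun _ _ => rfl

lemma refine_mem_tripartitions {R S T U V : OT} {I J : Finset ℕ} (hI : I ∈ NFinset U T V)
    (hJ : J ∈ NFinset R S U) :
    (select I J, I \ select I J, range (degO V) \ I) ∈ tripartitions R S T V := by
  obtain ⟨hIV, rfl, hT⟩ := mem_NFinset.1 hI
  obtain ⟨hJI, hR, hS⟩ := mem_NFinset.1 hJ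
  rw [degO_contractO hIV] at hJI hS
  rw [contractO_contractO hIV hJI] at hR
  rw [contractO_contractO hIV sdiff_subset, select_range_card_sdiff] at hS
  refine mem_tripartitions.2 ⟨⟨disjoint_sdiff, ?_, ?_⟩, ?_, hR, hS, hT⟩
  · exact disjoint_sdiff.mono_left sdiff_subset
  · exact sdiff_disjoint.mono_right select_subset
  · rw [union_sdiff_of_subset select_subset, union_sdiff_of_subset hIV]

lemma union_mem_NFinset {R S T V : OT} {A B C : Finset ℕ}
    (h : (A, B, C) ∈ tripartitions R S T V) :
    A ∪ B ∈ NFinset (contractO V (A ∪ B)) T V := by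
  obtain ⟨⟨-, hBC, hCA⟩, hunion, -, -, hT⟩ := mem_tripartitions.1 h
  refine mem_NFinset.2 ⟨hunion ▸ subset_union_left, rfl, ?_⟩
  rwa [← hunion, union_sdiff_cancel_left (disjoint_union_left.2 ⟨hCA.symm, hBC⟩)]

lemma ranks_mem_NFinset {R S T V : OT} {A B C : Finset ℕ}
    (h : (A, B, C) ∈ tripartitions R S T V) :
    ranks (A ∪ B) A ∈ NFinset R S (contractO V (A ∪ B)) := by
  obtain ⟨⟨hAB, -⟩, hunion, hR, hS, -⟩ := mem_tripartitions.1 h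
  have hI : A ∪ B ⊆ range (degO V) := hunion ▸ subset_union_left
  have hJ : ranks (A ∪ B) A ⊆ range #(A ∪ B) := ranks_subset_range subset_union_left
  rw [mem_NFinset, degO_contractO hI, contractO_contractO hI hJ,
    contractO_contractO hI sdiff_subset, select_range_card_sdiff, select_ranks subset_union_left,
    union_sdiff_cancel_left hAB]
  exact ⟨hJ, hR, hS⟩

lemma card_filter_tripartitions [DecidableEq OT] (R S T U V : OT) :
    #{p ∈ tripartitions R S T V | contractO V (p.1 ∪ p.2.1) = U} =
      Ncount R S U * Ncount U T V := by
  rw [Ncount, Ncount, ← card_product]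
  symm
  refine card_nbij' (fun (J, I) => (select I J, I \ select I J, range (degO V) \ I))
    (fun (A, B, _) => (ranks (A ∪ B) A, A ∪ B)) ?_ ?_ ?_ ?_
  · rintro ⟨J, I⟩ hJI
    obtain ⟨hJ, hI⟩ := mem_product.1 hJI
    refine mem_filter.2 ⟨refine_mem_tripartitions hI hJ, ?_⟩
    rw [union_sdiff_of_subset select_subset]
    exact (mem_NFinset.1 hI).2.1
  · rintro ⟨A, B, C⟩ hABC
    obtain ⟨hmem, rfl⟩ := mem_filter.1 hABC
    exact mem_product.2 ⟨ranks_mem_NFinset hmem, union_mem_NFinset hmem⟩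
  · rintro ⟨J, I⟩ hJI
    obtain ⟨hJ, hI⟩ := mem_product.1 hJI
    obtain ⟨hIV, rfl, -⟩ := mem_NFinset.1 hI
    have hJI : J ⊆ range #I := degO_contractO hIV ▸ (mem_NFinset.1 hJ).1
    simp only [union_sdiff_of_subset select_subset, ranks_select hJI]
  · rintro ⟨A, B, C⟩ hABC
    obtain ⟨⟨hAB, hBC, hCA⟩, hunion, -⟩ := mem_tripartitions.1 (mem_filter.1 hABC).1
    simp only [select_ranks subset_union_left, union_sdiff_cancel_left hAB, ← hunion,
      union_sdiff_cancel_left (disjoint_union_left.2 ⟨hCA.symm, hBC⟩)]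

theorem sum_Ncount_mul_Ncount (R S T V : OT) :
    ∑ U ∈ shuffleTerms R S, Ncount R S U * Ncount U T V = #(tripartitions R S T V) := by
  classical
  rw [card_eq_sum_card_fiberwise (f := fun p => contractO V (p.1 ∪ p.2.1)) (t := shuffleTerms R S)]
  · exact sum_congr rfl fun U _ => (card_filter_tripartitions R S T U V).symm
  · rintro ⟨A, B, C⟩ h
    exact mem_shuffleTerms.2
      ⟨rOT_contractO _ _, nonempty_NFinset_iff.1 ⟨_, ranks_mem_NFinset h⟩⟩

variable (K : Type) [Field K]

lemma shuffleM_eq_sum (S T : OT) :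
    shuffleM K S T = ∑ V ∈ shuffleTerms S T, Finsupp.single V (Ncount S T V : K) := by
  refine finsum_mem_eq_sum_of_inter_support_eq (s := {V | ROT V}) _ (Set.ext fun V => ?_)
  simp only [Set.mem_inter_iff, Set.mem_ofPred_eq, mem_coe, mem_shuffleTerms, Function.mem_support,
    ne_eq, Finsupp.single_eq_zero]
  refine and_congr_left fun h => (and_iff_left fun h₀ => h ?_).symm
  rw [h₀, Nat.cast_zero]

open Classical in
lemma shuffleM_apply (S T V : OT) :
    shuffleM K S T V = if ROT V then (Ncount S T V : K) else 0 := by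
  simp only [shuffleM_eq_sum, Finsupp.finsetSum_apply, Finsupp.single_apply, sum_ite_eq',
    mem_shuffleTerms, ite_and]
  split_ifs with hV hN
  · rfl
  · rw [not_not.1 hN, Nat.cast_zero]
  · rfl

lemma shuffleM_comm (S T : OT) : shuffleM K S T = shuffleM K T S := by
  ext V
  rw [shuffleM_apply, shuffleM_apply, Ncount_comm]

lemma shuffleM_none_left {T : OT} (hT : ROT T) : shuffleM K none T = Finsupp.single T 1 := by
  classical
  ext V
  rw [shuffleM_apply, Finsupp.single_apply]
  by_cases hV : ROT V
  · rw [if_pos hV, Ncount_none_left T hV]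
    simp [eq_comm]
  · rw [if_neg hV, if_neg]
    rintro rfl
    exact hV hT

/-- The planar shuffle product as a bilinear map. -/
noncomputable def shuffleBilin : AMod K →ₗ[K] AMod K →ₗ[K] AMod K :=
  Finsupp.linearCombination K fun S => Finsupp.linearCombination K (shuffleM K S)

variable {K}

lemma shuffleBilin_single (S T : OT) :
    shuffleBilin K (Finsupp.single S 1) (Finsupp.single T 1) = shuffleM K S T := by
  simp [shuffleBilin]

lemma shuffleF_eq_shuffleBilin (f g : AMod K) : shuffleF K f g = shuffleBilin K f g := by
  simp only [shuffleF, shuffleBilin, Finsupp.linearCombination_apply, Finsupp.sum,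
    LinearMap.sum_apply, LinearMap.smul_apply, smul_sum, smul_smul]

theorem shuffleF_comm (f g : AMod K) : shuffleF K f g = shuffleF K g f := by
  have : (shuffleBilin K).flip = shuffleBilin K := by
    ext S T : 4
    simpa [shuffleBilin_single] using shuffleM_comm K T S
  rw [shuffleF_eq_shuffleBilin, shuffleF_eq_shuffleBilin, ← LinearMap.flip_apply, this]

open Classical in
lemma shuffleF_shuffleM_apply (R S T V : OT) :
    shuffleF K (shuffleM K R S) (Finsupp.single T 1) V =
      if ROT V then (#(tripartitions R S T V) : K) else 0 := by
  have expand : shuffleF K (shuffleM K R S) (Finsupp.single T 1) =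
      ∑ U ∈ shuffleTerms R S, (Ncount R S U : K) • shuffleM K U T := by
    rw [shuffleF_eq_shuffleBilin, shuffleM_eq_sum, map_sum, LinearMap.sum_apply]
    refine sum_congr rfl fun U _ => ?_
    rw [← shuffleBilin_single, ← LinearMap.smul_apply, ← map_smul, Finsupp.smul_single_one]
  rw [expand, Finsupp.finsetSum_apply]
  simp only [Finsupp.smul_apply, shuffleM_apply, smul_eq_mul]
  split_ifs
  · simp only [← sum_Ncount_mul_Ncount, Nat.cast_sum, Nat.cast_mul]
  · simp only [mul_zero, sum_const_zero]

lemma shuffleF_shuffleM_rotate (R S T : OT) :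
    shuffleF K (shuffleM K R S) (Finsupp.single T 1) =
      shuffleF K (shuffleM K S T) (Finsupp.single R 1) := by
  ext V
  rw [shuffleF_shuffleM_apply, shuffleF_shuffleM_apply, card_tripartitions_rotate]

theorem shuffleF_assoc (f g h : AMod K) :
    shuffleF K (shuffleF K f g) h = shuffleF K f (shuffleF K g h) := by
  have : (shuffleBilin K).compr₂ (shuffleBilin K) =
      (LinearMap.llcomp K _ _ _).compl₁₂ (shuffleBilin K) (shuffleBilin K) := by
    ext R S T : 6
    simp only [LinearMap.coe_comp, Function.comp_apply, Finsupp.lsingle_apply,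
      LinearMap.compr₂_apply, shuffleBilin_single, LinearMap.compl₁₂_apply, LinearMap.llcomp_apply]
    rw [← shuffleF_eq_shuffleBilin, ← shuffleF_eq_shuffleBilin, shuffleF_shuffleM_rotate,
      shuffleF_comm]
  simp only [shuffleF_eq_shuffleBilin]
  exact LinearMap.congr_fun (LinearMap.congr_fun₂ this f g) h

theorem shuffleF_single_none_left {f : AMod K} (hf : suppRed K f) :
    shuffleF K (Finsupp.single none 1) f = f := by
  rw [shuffleF, Finsupp.sum_single_index (by simp)]
  conv_rhs => rw [← f.sum_single]
  refine Finsupp.sum_congr fun T hT => ?_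
  rw [one_mul, shuffleM_none_left K (hf T hT), Finsupp.smul_single_one]

end Shuffle

/-- The `K`-bilinear extension of the planar shuffle product makes the free
`K`-module on `PRT'` into a commutative, associative, unital `K`-algebra whose unit is the
empty tree `1` (i.e. `1 ⧢ f = f` for all `f`). -/
theorem shuffle_algebra (K : Type) [Field K] :
    (∀ f g : AMod K, suppRed K f → suppRed K g →
        shuffleF K f g = shuffleF K g f) ∧
      (∀ f g h : AMod K, suppRed K f → suppRed K g → suppRed K h →
        shuffleF K (shuffleF K f g) h = shuffleF K f (shuffleF K g h)) ∧
      (∀ f : AMod K, suppRed K f →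
        shuffleF K (Finsupp.single (none : OT) 1) f = f) ∧
      (∀ (a : K) (f f' g : AMod K), suppRed K f → suppRed K f' → suppRed K g →
        shuffleF K (a • f + f') g = a • shuffleF K f g + shuffleF K f' g) ∧
      (∀ (a : K) (f g g' : AMod K), suppRed K f → suppRed K g → suppRed K g' →
        shuffleF K f (a • g + g') = a • shuffleF K f g + shuffleF K f g') := by
  refine ⟨fun f g _ _ => shuffleF_comm f g, fun f g h _ _ _ => shuffleF_assoc f g h,
    fun f hf => shuffleF_single_none_left hf, fun a f f' g _ _ _ => ?_, fun a f g g' _ _ _ => ?_⟩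
  · simp only [shuffleF_eq_shuffleBilin, map_add, map_smul, LinearMap.add_apply,
      LinearMap.smul_apply]
  · simp only [shuffleF_eq_shuffleBilin, map_add, map_smul]
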